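/- Let m ≥ 2 be an integer and let M, N be coprime integers with N odd and positive, so that ζ = e^{2πiM/N} is a primitive odd Nth root of unity. Then lim_{t→0⁺} (m−1)·e^{(2πiM/N − t)(2m−3)²/(8(m−1))}·G_m(e^{2πiM/N − t}) = e^{2πiM(2m−3)²/(8(m−1)N)}·U_{m,N}(ζ). -/

import Mathlib

open Finset

/-- The q-Pochhammer symbol `(x;q)_n = ∏_{j=0}^{n-1} (1 - x q^j)`. -/
noncomputable def qPoch (x q : ℂ) (n : ℕ) : ℂ := ∏ j ∈ Finset.range n, (1 - x * q ^ j)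

/-- The Gaussian binomial coefficient `[n choose k]_q`. -/
noncomputable def qBinom (q : ℂ) (n k : ℕ) : ℂ :=
  if k ≤ n then qPoch q q n / (qPoch q q (n - k) * qPoch q q k) else 0

/-- Extend a tuple `g : Fin k → ℕ` to `ℕ → ℕ` by zero. -/
def pad (k : ℕ) (g : Fin k → ℕ) : ℕ → ℕ := fun j => if h : j < k then g ⟨j, h⟩ else 0

/-- The general term of the multi-sum `G_m(q)`: here `n j` denotes `n_{j+1}` (0-based indexing),
so `n (m-2)` is `n_{m-1}` and `n 0` is `n_1`. -/
noncomputable def Gterm (m : ℕ) (q : ℂ) (n : ℕ → ℕ) : ℂ :=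
  (-1) ^ (n (m - 2)) *
    q ^ (n (m - 2) * (n (m - 2) + 1) +
        ∑ j ∈ Finset.range (m - 2), (2 * (n j) ^ 2 + 2 * n j)) *
    qPoch q (q ^ 2) (n 0) / qPoch (-q) q (2 * n 0 + 1) *
    ∏ i ∈ Finset.range (m - 2), qBinom (q ^ 2) (n (i + 1)) (n i)

/-- The multi-sum `G_m(q)`. -/
noncomputable def G (m : ℕ) (q : ℂ) : ℂ := ∑' n : Fin (m - 1) → ℕ, Gterm m q (pad (m - 1) n)

/-- The truncated multi-sum `U_{m,N}(q)`. -/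
noncomputable def U (m N : ℕ) (q : ℂ) : ℂ :=
  ∑ n ∈ Fintype.piFinset (fun _ : Fin (m - 1) => Finset.range N), Gterm m q (pad (m - 1) n)

/-- The odd periodic function `χ_{4(m-1)}`. -/
def chiG (m : ℕ) (k : ℤ) : ℤ :=
  if k % (4 * ((m : ℤ) - 1)) = (2 * (m : ℤ) - 3) % (4 * ((m : ℤ) - 1)) then 1
  else if k % (4 * ((m : ℤ) - 1)) = (2 * (m : ℤ) - 1) % (4 * ((m : ℤ) - 1)) then -1
  else 0

/-!
Write `m = l + 2`. A Bailey pair relative to `q²` turns the innermost weight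
`(q;q²)_n / (-q;q)_{2n+1}` into a single sum, and each Gaussian binomial of the multi-sum is one
step of the Bailey chain, so the truncated sum `U_{m,K}(q)` collapses to
`∑_{r<K} (q^{E(r)} - q^{E(-1-r)}) (1 + boundary terms)` with `E(k) = 2(l+1)k² + (2l+1)k`.

For `|q| < 1` the boundary terms vanish as `K → ∞` and `G_m` is a false theta function. At a
primitive `N`th root of unity `ζ`, with `K = N` odd, the factors `q^{E(r)} - q^{E(-1-r)}` are
antisymmetric under `r ↦ N - 1 - r`, and so are the boundary terms at `j ↦ N - j`; all contributions
cancel except a removable singularity, whose value is found by letting `q → ζ` inside the disc: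
`U_{m,N}(ζ) = (l+1) ∑_{r<N} ζ^{E(r)} (1 - 2x_r)` with `x_r = (r + α)/N`, `α = (2l+1)/(4(l+1))`.

On the radius `q = ζ e^{-t}`, completing the square turns the false theta function into
`∑_{r<N} ζ^{E(r)} ∑_d (g(ε(d + x_r)) - g(ε(d + 1 - x_r)))` with `g(y) = e^{-y²}` and `ε → 0⁺`.
Each inner sum telescopes, up to `O(ε²)` per term, to `(1 - 2x_r) g(0)`, which is the same value.
-/

open Filter Topology

section GaussianBinomial

variable {p : ℂ}

lemma qPoch_zero (x q : ℂ) : qPoch x q 0 = 1 := prod_range_zero _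

lemma qPoch_succ (x q : ℂ) (n : ℕ) : qPoch x q (n + 1) = qPoch x q n * (1 - x * q ^ n) :=
  prod_range_succ _ _

lemma qPoch_add (x q : ℂ) (a b : ℕ) :
    qPoch x q (a + b) = qPoch x q a * qPoch (x * q ^ a) q b := by
  simp only [qPoch, prod_range_add, pow_add, mul_assoc]

lemma qPoch_self_succ (p : ℂ) (n : ℕ) : qPoch p p (n + 1) = qPoch p p n * (1 - p ^ (n + 1)) := by
  rw [qPoch_succ, pow_succ']

lemma one_sub_pow_succ_ne_zero (hp : ¬ IsOfFinOrder p) (n : ℕ) : 1 - p ^ (n + 1) ≠ 0 :=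
  sub_ne_zero.2 fun h => hp <| isOfFinOrder_iff_pow_eq_one.2 ⟨n + 1, n.succ_pos, h.symm⟩

lemma qPoch_self_ne_zero (hp : ¬ IsOfFinOrder p) (n : ℕ) : qPoch p p n ≠ 0 := by
  refine prod_ne_zero_iff.2 fun j _ => ?_
  rw [← pow_succ']
  exact one_sub_pow_succ_ne_zero hp j

lemma qBinom_eq_zero_of_lt {n k : ℕ} (h : n < k) : qBinom p n k = 0 := if_neg h.not_ge

lemma qBinom_add (p : ℂ) (a b : ℕ) :
    qBinom p (a + b) b = qPoch p p (a + b) / (qPoch p p a * qPoch p p b) := by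
  simp [qBinom]

lemma qBinom_zero_right (hp : ¬ IsOfFinOrder p) (n : ℕ) : qBinom p n 0 = 1 := by
  simpa [qPoch_zero, qPoch_self_ne_zero hp] using qBinom_add p n 0

lemma qBinom_self (hp : ¬ IsOfFinOrder p) (n : ℕ) : qBinom p n n = 1 := by
  simpa [qPoch_zero, qPoch_self_ne_zero hp] using qBinom_add p 0 n

lemma qBinom_succ_succ (hp : ¬ IsOfFinOrder p) (n k : ℕ) :
    qBinom p (n + 1) (k + 1) = qBinom p n k + p ^ (k + 1) * qBinom p n (k + 1) := by
  rcases lt_trichotomy n k with hk | rfl | hk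
  · simp [qBinom_eq_zero_of_lt, hk, hk.trans k.lt_succ_self]
  · simp [qBinom_self hp, qBinom_eq_zero_of_lt]
  · obtain ⟨a, rfl⟩ := Nat.exists_eq_add_of_lt hk
    rw [show k + a + 1 + 1 = (a + 1) + (k + 1) by ring, qBinom_add,
      show k + a + 1 = (a + 1) + k by ring, qBinom_add,
      show a + 1 + k = a + (k + 1) by ring, qBinom_add,
      show a + 1 + (k + 1) = a + (k + 1) + 1 by ring,
      qPoch_self_succ p (a + (k + 1)), qPoch_self_succ p a, qPoch_self_succ p k]
    have ha := qPoch_self_ne_zero hp a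
    have hk := qPoch_self_ne_zero hp k
    have ha' := one_sub_pow_succ_ne_zero hp a
    have hk' := one_sub_pow_succ_ne_zero hp k
    field_simp
    ring

lemma qBinom_mul_qBinom (hp : ¬ IsOfFinOrder p) (r i b : ℕ) :
    qBinom p (r + (i + b)) (r + i) * qBinom p (r + i) r =
      qBinom p (r + (i + b)) r * qBinom p (i + b) i := by
  rw [show r + (i + b) = b + (r + i) by ring, qBinom_add, add_comm r i, qBinom_add,
    show b + (i + r) = (i + b) + r by ring, qBinom_add, add_comm i b, qBinom_add]
  have hbi := qPoch_self_ne_zero hp (b + i)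
  have hir := qPoch_self_ne_zero hp (i + r)
  field_simp

lemma sum_qBinom_succ_mul (hp : ¬ IsOfFinOrder p) (n : ℕ) (f : ℕ → ℂ) :
    ∑ i ∈ range (n + 2), qBinom p (n + 1) i * f i =
      ∑ i ∈ range (n + 1), qBinom p n i * (p ^ i * f i + f (i + 1)) := by
  have hshift : ∑ i ∈ range (n + 1), qBinom p n i * (p ^ i * f i) =
      ∑ i ∈ range (n + 1), qBinom p n (i + 1) * (p ^ (i + 1) * f (i + 1)) + f 0 := by
    have hlast := sum_range_succ (fun i => qBinom p n i * (p ^ i * f i)) (n + 1)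
    rw [qBinom_eq_zero_of_lt n.lt_succ_self, zero_mul, add_zero, sum_range_succ',
      qBinom_zero_right hp, pow_zero, one_mul, one_mul] at hlast
    exact hlast.symm
  rw [sum_range_succ', qBinom_zero_right hp, one_mul]
  simp only [mul_add, sum_add_distrib, hshift, qBinom_succ_succ hp, add_mul, mul_assoc,
    mul_left_comm (p ^ _)]
  abel

/- A limiting case of the `q`-Chu–Vandermonde sum. -/
lemma sum_qBinom_mul_pow_div_qPoch (hp : ¬ IsOfFinOrder p) (n a : ℕ) :
    ∑ i ∈ range (n + 1), qBinom p n i * (p ^ (i * (i + a)) / qPoch p p (i + a)) =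
      1 / qPoch p p (n + a) := by
  induction n generalizing a with
  | zero => simp [qBinom_self hp]
  | succ n ih =>
    rw [sum_qBinom_succ_mul hp, show n + 1 + a = n + (a + 1) by ring, ← ih (a + 1)]
    refine sum_congr rfl fun i _ => congrArg _ ?_
    rw [show i + 1 + a = i + a + 1 by ring, show i + (a + 1) = i + a + 1 by ring, qPoch_self_succ]
    have hpoch := qPoch_self_ne_zero hp (i + a)
    have hfactor := one_sub_pow_succ_ne_zero hp (i + a)
    field_simp
    ring

end GaussianBinomial

section BaileyPair

/-- The kernel `(p;p)_n / ((p;p)_{n-r} (p;p)_{n+r+1})` of a Bailey pair relative to `a = p`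
(up to normalisation), extended by `0` to `n < r`. -/
noncomputable def baileyKernel (p : ℂ) (r n : ℕ) : ℂ :=
  qBinom p n r * (qPoch p p r / qPoch p p (n + r + 1))

variable {p : ℂ}

lemma baileyKernel_eq_zero_of_lt {r n : ℕ} (h : n < r) : baileyKernel p r n = 0 := by
  rw [baileyKernel, qBinom_eq_zero_of_lt h, zero_mul]

lemma baileyKernel_add (hp : ¬ IsOfFinOrder p) (r a : ℕ) :
    baileyKernel p r (a + r) =
      qPoch p p (a + r) / (qPoch p p a * qPoch p p (a + 2 * r + 1)) := by
  have hr := qPoch_self_ne_zero hp r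
  rw [baileyKernel, qBinom_add, show a + r + r + 1 = a + 2 * r + 1 by ring]
  field_simp

/- One step of the Bailey chain. -/
lemma sum_qBinom_mul_baileyKernel (hp : ¬ IsOfFinOrder p) (r : ℕ) {n K : ℕ} (hn : n < K) :
    ∑ j ∈ range K, p ^ (j ^ 2 + j) * qBinom p n j * baileyKernel p r j =
      p ^ (r ^ 2 + r) * baileyKernel p r n := by
  rw [eventually_constant_sum (N := n + 1)
    (fun j hj => by rw [qBinom_eq_zero_of_lt hj, mul_zero, zero_mul]) hn]
  rcases lt_or_ge n r with hr | hr
  · rw [baileyKernel_eq_zero_of_lt hr, mul_zero]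
    refine sum_eq_zero fun j hj => ?_
    rw [baileyKernel_eq_zero_of_lt (by grind), mul_zero]
  obtain ⟨a, rfl⟩ := Nat.exists_eq_add_of_le hr
  have hlow : ∑ j ∈ range r, p ^ (j ^ 2 + j) * qBinom p (r + a) j * baileyKernel p r j = 0 :=
    sum_eq_zero fun j hj => by rw [baileyKernel_eq_zero_of_lt (mem_range.1 hj), mul_zero]
  have hterm : ∀ i ∈ range (a + 1),
      p ^ ((r + i) ^ 2 + (r + i)) * qBinom p (r + a) (r + i) * baileyKernel p r (r + i) =
      p ^ (r ^ 2 + r) * qBinom p (r + a) r * qPoch p p r *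
        (qBinom p a i * (p ^ (i * (i + (2 * r + 1))) / qPoch p p (i + (2 * r + 1)))) := by
    intro i hi
    obtain ⟨b, rfl⟩ := Nat.exists_eq_add_of_le (show i ≤ a by grind)
    rw [baileyKernel, show (r + i) ^ 2 + (r + i) = r ^ 2 + r + i * (i + (2 * r + 1)) by ring,
      show r + i + r + 1 = i + (2 * r + 1) by ring]
    linear_combination p ^ (r ^ 2 + r + i * (i + (2 * r + 1))) *
      (qPoch p p r / qPoch p p (i + (2 * r + 1))) * qBinom_mul_qBinom hp r i b
  rw [add_assoc, sum_range_add, hlow, zero_add, sum_congr rfl hterm, ← mul_sum,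
    sum_qBinom_mul_pow_div_qPoch hp, baileyKernel, show a + (2 * r + 1) = r + a + r + 1 by ring]
  ring

lemma baileyKernel_succ_left (hp : ¬ IsOfFinOrder p) (r n : ℕ) :
    baileyKernel p (r + 1) n * (1 - p ^ (n + r + 2)) = baileyKernel p r n * (1 - p ^ (n - r)) := by
  rcases lt_trichotomy n r with h | rfl | h
  · rw [baileyKernel_eq_zero_of_lt h, baileyKernel_eq_zero_of_lt (h.trans r.lt_succ_self),
      zero_mul, zero_mul]
  · simp [baileyKernel_eq_zero_of_lt]
  obtain ⟨a, rfl⟩ := Nat.exists_eq_add_of_lt h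
  rw [show r + a + 1 = a + (r + 1) by ring, baileyKernel_add hp,
    show a + (r + 1) - r = a + 1 by lia, show a + (r + 1) = a + 1 + r by ring,
    baileyKernel_add hp, show a + 2 * (r + 1) + 1 = a + 1 + 2 * r + 1 + 1 by ring,
    qPoch_self_succ p a, qPoch_self_succ p (a + 1 + 2 * r + 1)]
  have ha := qPoch_self_ne_zero hp a
  have ha' := one_sub_pow_succ_ne_zero hp a
  have hr := qPoch_self_ne_zero hp (a + 1 + 2 * r + 1)
  have hr' := one_sub_pow_succ_ne_zero hp (a + 1 + 2 * r + 1)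
  field_simp
  ring

lemma baileyKernel_succ_right (hp : ¬ IsOfFinOrder p) (r n : ℕ) :
    baileyKernel p r n * (1 - p ^ (n + 1)) =
      baileyKernel p r (n + 1) * (1 - p ^ (n + 1 - r)) * (1 - p ^ (n + r + 2)) := by
  rcases lt_trichotomy (n + 1) r with h | rfl | h
  · simp [baileyKernel_eq_zero_of_lt h, baileyKernel_eq_zero_of_lt (n.lt_succ_self.trans h)]
  · simp [baileyKernel_eq_zero_of_lt]
  obtain ⟨a, rfl⟩ := Nat.exists_eq_add_of_le' (Nat.lt_succ_iff.1 h)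
  rw [baileyKernel_add hp, show a + r + 1 - r = a + 1 by lia,
    show a + r + 1 = a + 1 + r by ring, baileyKernel_add hp,
    show a + 1 + 2 * r + 1 = a + 2 * r + 1 + 1 by ring, show a + 1 + r = a + r + 1 by ring,
    qPoch_self_succ p a, qPoch_self_succ p (a + r), qPoch_self_succ p (a + 2 * r + 1)]
  have ha := qPoch_self_ne_zero hp a
  have ha' := one_sub_pow_succ_ne_zero hp a
  have hr := qPoch_self_ne_zero hp (a + 2 * r + 1)
  have hr' := one_sub_pow_succ_ne_zero hp (a + 2 * r + 1)
  field_simp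
  ring

end BaileyPair

section InitialPair

variable {q : ℂ}

lemma not_isOfFinOrder_sq (hq : ¬ IsOfFinOrder q) : ¬ IsOfFinOrder (q ^ 2) := by
  simpa [isOfFinOrder_pow] using hq

lemma one_add_pow_succ_ne_zero (hq : ¬ IsOfFinOrder q) (n : ℕ) : 1 + q ^ (n + 1) ≠ 0 := by
  intro h
  refine one_sub_pow_succ_ne_zero (not_isOfFinOrder_sq hq) n ?_
  linear_combination (1 - q ^ (n + 1)) * h

lemma qPoch_neg_self_ne_zero (hq : ¬ IsOfFinOrder q) (n : ℕ) : qPoch (-q) q n ≠ 0 := by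
  refine prod_ne_zero_iff.2 fun j _ => ?_
  rw [neg_mul, sub_neg_eq_add, ← pow_succ']
  exact one_add_pow_succ_ne_zero hq j

/-- The coefficient `α_r` of the initial Bailey pair, taken relative to `p = q²`. -/
noncomputable def initialCoeff (q : ℂ) (r : ℕ) : ℂ := (-1) ^ r * q ^ r ^ 2 * (1 - q ^ (2 * r + 1))

/- The right-hand side is the certificate of Zeilberger's algorithm for the recurrence in `n`
satisfied by `∑ r, initialCoeff q r * baileyKernel (q ^ 2) r n`. -/
lemma sum_initialPair_recurrence (hq : ¬ IsOfFinOrder q) (n R : ℕ) :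
    (1 - q ^ (2 * n + 2)) * ∑ r ∈ range R, initialCoeff q r *
        ((1 + q ^ (2 * n + 2)) * (1 + q ^ (2 * n + 3)) * baileyKernel (q ^ 2) r (n + 1) -
          (1 - q ^ (2 * n + 1)) * baileyKernel (q ^ 2) r n) =
      -((-1) ^ R * q ^ (R ^ 2 + 2 * (n + 1 - R)) * (1 - q ^ (4 * R)) *
        (1 - q ^ (2 * (n + R + 2))) * baileyKernel (q ^ 2) R (n + 1)) := by
  have hp := not_isOfFinOrder_sq hq
  induction R with
  | zero => simp
  | succ R ih =>
    rw [sum_range_succ, mul_add, ih, initialCoeff]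
    rcases lt_trichotomy (n + 1) R with h | rfl | h
    · simp [baileyKernel_eq_zero_of_lt h, baileyKernel_eq_zero_of_lt (n.lt_succ_self.trans h),
        baileyKernel_eq_zero_of_lt (h.trans R.lt_succ_self)]
    · rw [baileyKernel_eq_zero_of_lt n.lt_succ_self,
        baileyKernel_eq_zero_of_lt (n + 1).lt_succ_self, Nat.sub_self]
      ring
    obtain ⟨b, rfl⟩ := Nat.exists_eq_add_of_le' (Nat.lt_succ_iff.1 h)
    have hleft := baileyKernel_succ_left hp R (b + R + 1)
    have hright := baileyKernel_succ_right hp R (b + R)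
    rw [show b + R + 1 - R = b + 1 by lia] at hleft hright ⊢
    rw [show b + R + 1 - (R + 1) = b by lia]
    linear_combination
      -((-1) ^ R * q ^ R ^ 2 * (1 - q ^ (2 * R + 1)) * (1 - q ^ (2 * (b + R) + 1))) * hright +
      (-1) ^ (R + 1) * q ^ ((R + 1) ^ 2 + 2 * b) * (1 - q ^ (4 * (R + 1))) * hleft

lemma initialPair_recurrence (hq : ¬ IsOfFinOrder q) {n K : ℕ} (hn : n + 1 < K) :
    (1 + q ^ (2 * n + 2)) * (1 + q ^ (2 * n + 3)) * ∑ r ∈ range K,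
        initialCoeff q r * baileyKernel (q ^ 2) r (n + 1) =
      (1 - q ^ (2 * n + 1)) * ∑ r ∈ range K, initialCoeff q r * baileyKernel (q ^ 2) r n := by
  have htel := sum_initialPair_recurrence hq n K
  rw [baileyKernel_eq_zero_of_lt hn, mul_zero, neg_zero] at htel
  have hne : 1 - q ^ (2 * n + 2) ≠ 0 := one_sub_pow_succ_ne_zero hq _
  rw [← sub_eq_zero, mul_sum, mul_sum, ← sum_sub_distrib, ← (mul_eq_zero.1 htel).resolve_left hne]
  exact sum_congr rfl fun r _ => by ring

lemma sum_initialPair (hq : ¬ IsOfFinOrder q) {n K : ℕ} (hn : n < K) :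
    ∑ r ∈ range K, initialCoeff q r * baileyKernel (q ^ 2) r n =
      qPoch q (q ^ 2) n / qPoch (-q) q (2 * n + 1) := by
  induction n with
  | zero =>
    rw [eventually_constant_sum (N := 1)
      (fun r hr => by rw [baileyKernel_eq_zero_of_lt hr, mul_zero]) hn, sum_range_one]
    have hone : 1 + q ≠ 0 := by simpa using one_add_pow_succ_ne_zero hq 0
    have hsub : 1 - q ^ 2 ≠ 0 := one_sub_pow_succ_ne_zero hq 1
    have hkernel : baileyKernel (q ^ 2) 0 0 = 1 / (1 - q ^ 2) := by
      simp [baileyKernel, qBinom_self (not_isOfFinOrder_sq hq), qPoch_succ, qPoch_zero]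
    have hden : qPoch (-q) q (2 * 0 + 1) = 1 + q := by simp [qPoch_succ, qPoch_zero]
    rw [hkernel, hden, qPoch_zero, initialCoeff]
    field_simp
    ring
  | succ n ih =>
    have hrec := initialPair_recurrence hq hn
    rw [ih (n.lt_succ_self.trans hn)] at hrec
    have hfirst : 1 + q ^ (2 * n + 2) ≠ 0 := one_add_pow_succ_ne_zero hq _
    have hsecond : 1 + q ^ (2 * n + 3) ≠ 0 := one_add_pow_succ_ne_zero hq _
    have hden : qPoch (-q) q (2 * (n + 1) + 1) =
        qPoch (-q) q (2 * n + 1) * (1 + q ^ (2 * n + 2)) * (1 + q ^ (2 * n + 3)) := by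
      rw [mul_add_one, qPoch_succ, qPoch_succ]
      ring
    have hpoch := qPoch_neg_self_ne_zero hq (2 * n + 1)
    rw [hden, qPoch_succ, eq_div_iff (by positivity)]
    field_simp at hrec ⊢
    linear_combination hrec

end InitialPair

section MultiSum

variable {q : ℂ}

lemma pad_of_lt {k j : ℕ} (g : Fin k → ℕ) (h : j < k) : pad k g j = g ⟨j, h⟩ := dif_pos h

lemma pad_snoc_of_lt {l j : ℕ} (g : Fin l → ℕ) (x : ℕ) (h : j < l) :
    pad (l + 1) (Fin.snoc g x : Fin (l + 1) → ℕ) j = pad l g j := by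
  rw [pad_of_lt _ h, pad_of_lt _ (h.trans l.lt_succ_self)]
  exact Fin.snoc_castSucc (α := fun _ => ℕ) x g ⟨j, h⟩

lemma pad_snoc_last {l : ℕ} (g : Fin l → ℕ) (x : ℕ) :
    pad (l + 1) (Fin.snoc g x : Fin (l + 1) → ℕ) l = x := by
  rw [pad_of_lt _ l.lt_succ_self]
  exact Fin.snoc_last (α := fun _ => ℕ) x g

lemma sum_piFinset_snoc {α M : Type*} [AddCommMonoid M] (l : ℕ) (s : Finset α)
    (F : (Fin (l + 1) → α) → M) :
    ∑ n ∈ Fintype.piFinset (fun _ : Fin (l + 1) => s), F n =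
      ∑ x ∈ s, ∑ g ∈ Fintype.piFinset (fun _ : Fin l => s), F (Fin.snoc g x) := by
  rw [← sum_product']
  refine (sum_equiv (Fin.snocEquiv fun _ => α) (fun y => ?_) fun y _ => rfl).symm
  simp [Fin.forall_fin_succ', and_comm]

/-- The factor of the summand of `G_{l+2}` that does not involve the sign and the Gaussian power
attached to the last variable `n_{l+1}`. -/
noncomputable def chainWeight (l : ℕ) (q : ℂ) (n : ℕ → ℕ) : ℂ :=
  q ^ (∑ j ∈ range l, (2 * n j ^ 2 + 2 * n j)) *
    (qPoch q (q ^ 2) (n 0) / qPoch (-q) q (2 * n 0 + 1)) *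
    ∏ i ∈ range l, qBinom (q ^ 2) (n (i + 1)) (n i)

lemma Gterm_add_two (l : ℕ) (q : ℂ) (n : ℕ → ℕ) :
    Gterm (l + 2) q n = (-1) ^ n l * q ^ (n l * (n l + 1)) * chainWeight l q n := by
  rw [Gterm, chainWeight, Nat.add_sub_cancel, pow_add]
  ring

lemma chainWeight_congr {l : ℕ} (q : ℂ) {n n' : ℕ → ℕ} (h : ∀ j ≤ l, n j = n' j) :
    chainWeight l q n = chainWeight l q n' := by
  have hsum : ∑ j ∈ range l, (2 * n j ^ 2 + 2 * n j) = ∑ j ∈ range l, (2 * n' j ^ 2 + 2 * n' j) :=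
    sum_congr rfl fun j hj => by rw [h j (mem_range.1 hj).le]
  have hprod : ∏ i ∈ range l, qBinom (q ^ 2) (n (i + 1)) (n i) =
      ∏ i ∈ range l, qBinom (q ^ 2) (n' (i + 1)) (n' i) :=
    prod_congr rfl fun i hi => by rw [h i (mem_range.1 hi).le, h (i + 1) (mem_range.1 hi)]
  rw [chainWeight, chainWeight, hsum, hprod, h 0 l.zero_le]

lemma chainWeight_succ (l : ℕ) (q : ℂ) (n : ℕ → ℕ) :
    chainWeight (l + 1) q n =
      (q ^ 2) ^ (n l ^ 2 + n l) * qBinom (q ^ 2) (n (l + 1)) (n l) * chainWeight l q n := by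
  rw [chainWeight, chainWeight, sum_range_succ, prod_range_succ]
  ring

/-- The coefficient `α_r` of the Bailey pair obtained from the initial one by `l` chain steps. -/
noncomputable def chainCoeff (l : ℕ) (q : ℂ) (r : ℕ) : ℂ :=
  initialCoeff q r * (q ^ 2) ^ (l * (r ^ 2 + r))

lemma chainCoeff_succ (l : ℕ) (q : ℂ) (r : ℕ) :
    chainCoeff (l + 1) q r = chainCoeff l q r * (q ^ 2) ^ (r ^ 2 + r) := by
  rw [chainCoeff, chainCoeff]
  ring

lemma sum_chainWeight (hq : ¬ IsOfFinOrder q) (K l : ℕ) (Φ : ℕ → ℂ) :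
    ∑ n ∈ Fintype.piFinset (fun _ : Fin (l + 1) => range K),
        Φ (pad (l + 1) n l) * chainWeight l q (pad (l + 1) n) =
      ∑ x ∈ range K, Φ x * ∑ r ∈ range K, chainCoeff l q r * baileyKernel (q ^ 2) r x := by
  induction l generalizing Φ with
  | zero =>
    rw [sum_piFinset_snoc]
    refine sum_congr rfl fun x hx => ?_
    simp [pad_snoc_last, chainWeight, chainCoeff, ← sum_initialPair hq (mem_range.1 hx)]
  | succ l ih =>
    have hinner : ∀ x ∈ range K, ∑ g ∈ Fintype.piFinset (fun _ : Fin (l + 1) => range K),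
        Φ x * ((q ^ 2) ^ (pad (l + 1) g l ^ 2 + pad (l + 1) g l) *
          qBinom (q ^ 2) x (pad (l + 1) g l)) * chainWeight l q (pad (l + 1) g) =
        Φ x * ∑ r ∈ range K, chainCoeff (l + 1) q r * baileyKernel (q ^ 2) r x := by
      intro x hx
      rw [ih fun y => Φ x * ((q ^ 2) ^ (y ^ 2 + y) * qBinom (q ^ 2) x y)]
      simp only [mul_sum]
      rw [sum_comm]
      refine sum_congr rfl fun r _ => ?_
      have hchain := sum_qBinom_mul_baileyKernel (not_isOfFinOrder_sq hq) r (mem_range.1 hx)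
      rw [chainCoeff_succ, mul_assoc (chainCoeff l q r), ← hchain, mul_sum, mul_sum]
      exact sum_congr rfl fun y _ => by ring
    rw [sum_piFinset_snoc, ← sum_congr rfl hinner]
    refine sum_congr rfl fun x _ => sum_congr rfl fun g _ => ?_
    rw [chainWeight_succ, pad_snoc_last, pad_snoc_of_lt _ _ l.lt_succ_self,
      chainWeight_congr q fun j hj => pad_snoc_of_lt g x (Nat.lt_succ_of_le hj)]
    ring

/-- The truncated sum `∑_{n<K} (-1)^n q^{n(n+1)} (p)_n / ((p)_{n-r} (p)_{n+r+1})`, `p = q²`, that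
remains when the Bailey chain is summed over its last variable. -/
noncomputable def partialBaileySum (q : ℂ) (K r : ℕ) : ℂ :=
  ∑ n ∈ range K, (-1) ^ n * q ^ (n * (n + 1)) * baileyKernel (q ^ 2) r n

lemma U_add_two (hq : ¬ IsOfFinOrder q) (l K : ℕ) :
    U (l + 2) K q = ∑ r ∈ range K, chainCoeff l q r * partialBaileySum q K r := by
  have h := sum_chainWeight hq K l fun y => (-1) ^ y * q ^ (y * (y + 1))
  simp only [← Gterm_add_two, mul_sum] at h
  simp only [partialBaileySum, mul_sum]
  rw [sum_comm]
  exact h.trans (sum_congr rfl fun x _ => sum_congr rfl fun r _ => by ring)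

end MultiSum

section PartialBaileySum

variable {q : ℂ}

lemma partialBaileySum_zero (hq : ¬ IsOfFinOrder q) (K : ℕ) :
    partialBaileySum q K 0 = 1 - (-1) ^ K * q ^ (K * (K + 1)) / qPoch (q ^ 2) (q ^ 2) K := by
  have hp := not_isOfFinOrder_sq hq
  induction K with
  | zero => simp [partialBaileySum, qPoch_zero]
  | succ K ih =>
    rw [partialBaileySum, sum_range_succ, ← partialBaileySum, ih, baileyKernel,
      qBinom_zero_right hp, qPoch_zero, add_zero, qPoch_self_succ]
    have hK := qPoch_self_ne_zero hp K
    have hK' := one_sub_pow_succ_ne_zero hp K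
    field_simp
    ring

lemma baileyKernel_succ_left_add (hq : ¬ IsOfFinOrder q) (r K : ℕ) :
    baileyKernel (q ^ 2) (r + 1) K + q ^ (2 * (r + 1)) * baileyKernel (q ^ 2) r K =
      (1 + q ^ (2 * (r + 1))) *
        (q ^ (2 * (K + 1)) * (baileyKernel (q ^ 2) r (K + 1) * (1 - (q ^ 2) ^ (K + 1 - r))) +
          baileyKernel (q ^ 2) r K * (1 - (q ^ 2) ^ (K - r))) := by
  have hp := not_isOfFinOrder_sq hq
  rcases lt_or_ge K r with h | h
  · simp [baileyKernel_eq_zero_of_lt h, baileyKernel_eq_zero_of_lt (h.trans r.lt_succ_self),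
      Nat.sub_eq_zero_of_le (Nat.succ_le_of_lt h)]
  obtain ⟨a, rfl⟩ := Nat.exists_eq_add_of_le' h
  have hleft := baileyKernel_succ_left hp r (a + r)
  have hright := baileyKernel_succ_right hp r (a + r)
  have hne := one_sub_pow_succ_ne_zero hp (a + r + r + 1)
  rw [show a + r + 1 - r = a + 1 by lia] at hright ⊢
  rw [show a + r - r = a by lia] at hleft ⊢
  refine mul_right_cancel₀ hne ?_
  linear_combination hleft + (1 + q ^ (2 * (r + 1))) * q ^ (2 * (a + r + 1)) * hright

lemma partialBaileySum_succ (hq : ¬ IsOfFinOrder q) (K r : ℕ) :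
    partialBaileySum q K (r + 1) + q ^ (2 * (r + 1)) * partialBaileySum q K r =
      -((1 + q ^ (2 * (r + 1))) * ((-1) ^ K * q ^ (K * (K + 1))) *
        (baileyKernel (q ^ 2) r K * (1 - (q ^ 2) ^ (K - r)))) := by
  induction K with
  | zero => simp [partialBaileySum]
  | succ K ih =>
    simp only [partialBaileySum, sum_range_succ] at ih ⊢
    linear_combination ih + (-1) ^ K * q ^ (K * (K + 1)) * baileyKernel_succ_left_add hq r K

/-- The boundary term produced at step `j` when the recursion in `r` of `partialBaileySum q K r` is
solved.  The quotient `(p)_{K+j} / (p)_K`, `p = q²`, is written as a single symbol so that the term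
stays finite at roots of unity of order `K`. -/
noncomputable def boundaryCoeff (q : ℂ) (K j : ℕ) : ℂ :=
  (-1) ^ (K + j) * (1 + q ^ (2 * j)) * q ^ ((K - j) * (K + j + 1)) /
    (qPoch (q ^ 2) (q ^ 2) (K - j) * qPoch ((q ^ 2) ^ (K + 1)) (q ^ 2) j)

lemma neg_one_pow_mul_boundaryCoeff (hq : ¬ IsOfFinOrder q) {K r : ℕ} (hr : r + 1 ≤ K) :
    (-1) ^ (r + 1) * q ^ ((r + 1) * (r + 1 + 1)) * boundaryCoeff q K (r + 1) =
      (1 + q ^ (2 * (r + 1))) * ((-1) ^ K * q ^ (K * (K + 1))) *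
        (baileyKernel (q ^ 2) r K * (1 - (q ^ 2) ^ (K - r))) := by
  have hp := not_isOfFinOrder_sq hq
  obtain ⟨a, rfl⟩ := Nat.exists_eq_add_of_le' hr
  have hsign : (-1 : ℂ) ^ (r + 1) * (-1) ^ (a + (r + 1) + (r + 1)) = (-1) ^ (a + (r + 1)) := by
    rw [← pow_add, show r + 1 + (a + (r + 1) + (r + 1)) = a + (r + 1) + 2 * (r + 1) by ring,
      pow_add, pow_mul, neg_one_sq, one_pow, mul_one]
  have hpoch := qPoch_add (q ^ 2) (q ^ 2) (a + (r + 1)) (r + 1)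
  rw [← pow_succ'] at hpoch
  have htop : qPoch (q ^ 2) (q ^ 2) (a + (r + 1)) ≠ 0 := qPoch_self_ne_zero hp _
  have hright : qPoch ((q ^ 2) ^ (a + (r + 1) + 1)) (q ^ 2) (r + 1) ≠ 0 :=
    right_ne_zero_of_mul (hpoch ▸ qPoch_self_ne_zero hp _)
  have ha := qPoch_self_ne_zero hp a
  have ha' := one_sub_pow_succ_ne_zero hp a
  have hkernel : baileyKernel (q ^ 2) r (a + (r + 1)) * (1 - (q ^ 2) ^ (a + 1)) =
      1 / (qPoch (q ^ 2) (q ^ 2) a * qPoch ((q ^ 2) ^ (a + (r + 1) + 1)) (q ^ 2) (r + 1)) := by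
    rw [show a + (r + 1) = a + 1 + r by ring, baileyKernel_add hp,
      show a + 1 + 2 * r + 1 = a + (r + 1) + (r + 1) by ring, hpoch, qPoch_self_succ _ a,
      show a + 1 + r = a + (r + 1) by ring]
    field_simp
  rw [show a + (r + 1) - r = a + 1 by lia, hkernel, boundaryCoeff, Nat.add_sub_cancel, ← hsign]
  field_simp
  ring

lemma partialBaileySum_eq (hq : ¬ IsOfFinOrder q) {K r : ℕ} (hr : r ≤ K) :
    partialBaileySum q K r = (-1) ^ r * q ^ (r * (r + 1)) *
      (1 - (-1) ^ K * q ^ (K * (K + 1)) / qPoch (q ^ 2) (q ^ 2) K -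
        ∑ j ∈ range r, boundaryCoeff q K (j + 1)) := by
  induction r with
  | zero => simp [partialBaileySum_zero hq]
  | succ r ih =>
    rw [eq_sub_of_add_eq (partialBaileySum_succ hq K r), ih (Nat.le_of_succ_le hr),
      sum_range_succ]
    linear_combination neg_one_pow_mul_boundaryCoeff hq hr

/-- The summand of the false theta function equal to `G_{l+2}`. -/
noncomputable def falseThetaTerm (l : ℕ) (q : ℂ) (r : ℕ) : ℂ :=
  q ^ (2 * (l + 1) * r ^ 2 + (2 * l + 1) * r) * (1 - q ^ (2 * r + 1))

lemma chainCoeff_mul (l : ℕ) (q : ℂ) (r : ℕ) :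
    chainCoeff l q r * ((-1) ^ r * q ^ (r * (r + 1))) = falseThetaTerm l q r := by
  have hsign : ((-1 : ℂ) ^ r) ^ 2 = 1 := by rw [← pow_mul', pow_mul, neg_one_sq, one_pow]
  rw [chainCoeff, initialCoeff, falseThetaTerm]
  linear_combination q ^ (2 * (l + 1) * r ^ 2 + (2 * l + 1) * r) * (1 - q ^ (2 * r + 1)) * hsign

lemma U_add_two_eq (hq : ¬ IsOfFinOrder q) (l K : ℕ) :
    U (l + 2) K q = ∑ r ∈ range K, falseThetaTerm l q r *
      (1 - (-1) ^ K * q ^ (K * (K + 1)) / qPoch (q ^ 2) (q ^ 2) K -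
        ∑ j ∈ range r, boundaryCoeff q K (j + 1)) := by
  rw [U_add_two hq]
  refine sum_congr rfl fun r hr => ?_
  rw [partialBaileySum_eq hq (mem_range.1 hr).le, ← mul_assoc, chainCoeff_mul]

end PartialBaileySum

section Convergence

variable {q : ℂ}

lemma not_isOfFinOrder_of_norm_lt_one (hq : ‖q‖ < 1) : ¬ IsOfFinOrder q :=
  fun h => hq.ne h.norm_eq_one

lemma norm_sq_lt_one (hq : ‖q‖ < 1) : ‖q ^ 2‖ < 1 := by
  rw [norm_pow]
  exact pow_lt_one₀ (norm_nonneg q) hq two_ne_zero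

lemma summable_norm_mul_pow (hq : ‖q‖ < 1) (x : ℂ) : Summable fun j : ℕ => ‖-(x * q ^ j)‖ := by
  simpa only [norm_neg, norm_mul, norm_pow] using
    (summable_geometric_of_lt_one (norm_nonneg q) hq).mul_left ‖x‖

lemma tendsto_qPoch (hq : ‖q‖ < 1) (x : ℂ) :
    Tendsto (qPoch x q) atTop (𝓝 (∏' j, (1 - x * q ^ j))) := by
  simp only [sub_eq_add_neg]
  refine (multipliable_one_add_of_summable
    (summable_norm_mul_pow hq x)).tendsto_prod_tprod_nat.congr fun n => ?_
  simp only [qPoch, sub_eq_add_neg]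

lemma exists_norm_qPoch_le (hq : ‖q‖ < 1) (x : ℂ) : ∃ C, ∀ n, ‖qPoch x q n‖ ≤ C := by
  obtain ⟨C, hC⟩ := (tendsto_qPoch hq x).norm.bddAbove_range
  exact ⟨C, fun n => hC ⟨n, rfl⟩⟩

lemma exists_norm_inv_qPoch_le (hq : ‖q‖ < 1) {x : ℂ} (hx : ∀ n, qPoch x q n ≠ 0) :
    ∃ C, ∀ n, ‖(qPoch x q n)⁻¹‖ ≤ C := by
  have hfactor : ∀ j, 1 + -(x * q ^ j) ≠ 0 := fun j => by
    rw [← sub_eq_add_neg]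
    exact right_ne_zero_of_mul (qPoch_succ x q j ▸ hx (j + 1))
  have hlim : ∏' j, (1 - x * q ^ j) ≠ 0 := by
    simpa only [sub_eq_add_neg] using
      tprod_one_add_ne_zero_of_summable hfactor (summable_norm_mul_pow hq x)
  obtain ⟨C, hC⟩ := ((tendsto_qPoch hq x).inv₀ hlim).norm.bddAbove_range
  exact ⟨C, fun n => hC ⟨n, rfl⟩⟩

lemma exists_norm_qBinom_le (hq : ‖q‖ < 1) : ∃ C, ∀ n k, ‖qBinom q n k‖ ≤ C := by
  obtain ⟨A, hA⟩ := exists_norm_qPoch_le hq q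
  obtain ⟨B, hB⟩ := exists_norm_inv_qPoch_le hq
    (qPoch_self_ne_zero (not_isOfFinOrder_of_norm_lt_one hq))
  have hA0 : 0 ≤ A := (norm_nonneg _).trans (hA 0)
  have hB0 : 0 ≤ B := (norm_nonneg _).trans (hB 0)
  refine ⟨A * (B * B), fun n k => ?_⟩
  rcases lt_or_ge n k with h | h
  · rw [qBinom_eq_zero_of_lt h, norm_zero]
    positivity
  · rw [qBinom, if_pos h, div_eq_mul_inv, mul_inv, norm_mul, norm_mul]
    gcongr <;> apply_assumption

lemma summable_prod_pi {α : Type*} {f : α → ℝ} (hf : Summable f) (hf0 : 0 ≤ f) (k : ℕ) :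
    Summable fun n : Fin k → α => ∏ i, f (n i) := by
  induction k with
  | zero => exact Summable.of_finite
  | succ k ih =>
    rw [← (Fin.consEquiv fun _ => α).summable_iff]
    refine (hf.mul_of_nonneg ih hf0 fun n => prod_nonneg fun i _ => hf0 (n i)).congr fun y => ?_
    simp [Fin.consEquiv, Fin.prod_univ_succ]

lemma exists_norm_Gterm_le (hq : ‖q‖ < 1) (l : ℕ) :
    ∃ C, ∀ n : Fin (l + 1) → ℕ, ‖Gterm (l + 2) q (pad (l + 1) n)‖ ≤ C * ∏ i, ‖q‖ ^ n i := by
  obtain ⟨A, hA⟩ := exists_norm_qPoch_le (norm_sq_lt_one hq) q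
  obtain ⟨B, hB⟩ := exists_norm_inv_qPoch_le hq
    (qPoch_neg_self_ne_zero (not_isOfFinOrder_of_norm_lt_one hq))
  obtain ⟨D, hD⟩ := exists_norm_qBinom_le (norm_sq_lt_one hq)
  have hA0 : 0 ≤ A := (norm_nonneg _).trans (hA 0)
  have hB0 : 0 ≤ B := (norm_nonneg _).trans (hB 0)
  have hpow : ∀ a b : ℕ, a ≤ b → ‖q‖ ^ b ≤ ‖q‖ ^ a := fun a b =>
    pow_le_pow_of_le_one (norm_nonneg q) hq.le
  refine ⟨A * B * D ^ l, fun n => ?_⟩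
  set N := pad (l + 1) n
  have hprod : ∏ i, ‖q‖ ^ n i = ‖q‖ ^ (N l + ∑ j ∈ range l, N j) := by
    have hpad : ∑ i, n i = ∑ i : Fin (l + 1), N i := sum_congr rfl fun i _ => (pad_of_lt n i.2).symm
    rw [prod_pow_eq_pow_sum, hpad, Fin.sum_univ_eq_sum_range, sum_range_succ, add_comm]
  have hbinom : ‖∏ i ∈ range l, qBinom (q ^ 2) (N (i + 1)) (N i)‖ ≤ D ^ l := by
    rw [norm_prod]
    exact (prod_le_prod (fun _ _ => norm_nonneg _) fun i _ => hD _ _).trans_eq (by simp)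
  have hgauss : ‖q‖ ^ (N l * (N l + 1) + ∑ j ∈ range l, (2 * N j ^ 2 + 2 * N j)) ≤
      ‖q‖ ^ (N l + ∑ j ∈ range l, N j) :=
    hpow _ _ (add_le_add (by nlinarith) (sum_le_sum fun j _ => by nlinarith))
  rw [hprod, Gterm, Nat.add_sub_cancel, div_eq_mul_inv]
  simp only [norm_mul, norm_pow, norm_neg, norm_one, one_pow, one_mul]
  calc _ ≤ ‖q‖ ^ (N l + ∑ j ∈ range l, N j) * A * B * D ^ l := by
        gcongr
        exacts [hA _, hB _]
    _ = _ := by ring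

lemma tendsto_piFinset_range_atTop (k : ℕ) :
    Tendsto (fun K => Fintype.piFinset fun _ : Fin k => range K) atTop atTop := by
  refine tendsto_atTop_finset_of_monotone
    (fun K K' h => Fintype.piFinset_subset _ _ fun _ => range_mono h) fun n => ⟨∑ i, n i + 1, ?_⟩
  simpa [Nat.lt_succ_iff] using fun i => single_le_sum_of_canonicallyOrdered (mem_univ i)

lemma tendsto_U_atTop (hq : ‖q‖ < 1) (l : ℕ) :
    Tendsto (fun K => U (l + 2) K q) atTop (𝓝 (G (l + 2) q)) := by
  obtain ⟨C, hC⟩ := exists_norm_Gterm_le hq l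
  have hgeom := summable_prod_pi (summable_geometric_of_lt_one (norm_nonneg q) hq)
    (fun j => pow_nonneg (norm_nonneg q) j) (l + 1)
  have hsum := Summable.of_norm_bounded (hgeom.mul_left C) hC
  exact hsum.hasSum.comp (tendsto_piFinset_range_atTop (l + 1))

lemma exists_norm_boundaryCoeff_le (hq : ‖q‖ < 1) :
    ∃ C, 0 ≤ C ∧ ∀ K j, j < K → ‖boundaryCoeff q K j‖ ≤ C * ‖q‖ ^ K := by
  have hp := not_isOfFinOrder_of_norm_lt_one (norm_sq_lt_one hq)
  obtain ⟨A, hA⟩ := exists_norm_qPoch_le (norm_sq_lt_one hq) (q ^ 2)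
  obtain ⟨B, hB⟩ := exists_norm_inv_qPoch_le (norm_sq_lt_one hq) (qPoch_self_ne_zero hp)
  have hA0 : 0 ≤ A := (norm_nonneg _).trans (hA 0)
  have hB0 : 0 ≤ B := (norm_nonneg _).trans (hB 0)
  refine ⟨2 * (B * (A * B)), by positivity, fun K j hj => ?_⟩
  have hquot : (qPoch ((q ^ 2) ^ (K + 1)) (q ^ 2) j)⁻¹ =
      qPoch (q ^ 2) (q ^ 2) K * (qPoch (q ^ 2) (q ^ 2) (K + j))⁻¹ := by
    rw [qPoch_add, ← pow_succ', mul_inv, mul_inv_cancel_left₀ (qPoch_self_ne_zero hp K)]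
  have htwo : ‖1 + q ^ (2 * j)‖ ≤ 2 := by
    refine (norm_add_le _ _).trans ?_
    rw [norm_one, norm_pow]
    linarith [pow_le_one₀ (n := 2 * j) (norm_nonneg q) hq.le]
  have hexp : K ≤ (K - j) * (K + j + 1) := by
    nlinarith [Nat.sub_pos_of_lt hj]
  have hpow : ‖q‖ ^ ((K - j) * (K + j + 1)) ≤ ‖q‖ ^ K :=
    pow_le_pow_of_le_one (norm_nonneg q) hq.le hexp
  rw [boundaryCoeff, div_eq_mul_inv, mul_inv, hquot]
  simp only [norm_mul, norm_pow, norm_neg, norm_one, one_pow, one_mul]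
  calc _ ≤ 2 * ‖q‖ ^ K * (B * (A * B)) := by
        gcongr <;> apply_assumption
    _ = _ := by ring

lemma summable_norm_falseThetaTerm (hq : ‖q‖ < 1) (l : ℕ) :
    Summable fun r => ‖falseThetaTerm l q r‖ := by
  refine Summable.of_nonneg_of_le (fun _ => norm_nonneg _) (fun r => ?_)
    ((summable_geometric_of_lt_one (norm_nonneg q) hq).mul_right 2)
  have htwo : ‖1 - q ^ (2 * r + 1)‖ ≤ 2 := by
    refine (norm_sub_le _ _).trans ?_
    rw [norm_one, norm_pow]
    linarith [pow_le_one₀ (n := 2 * r + 1) (norm_nonneg q) hq.le]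
  have hexp : r ≤ 2 * (l + 1) * r ^ 2 + (2 * l + 1) * r := by nlinarith
  rw [falseThetaTerm, norm_mul, norm_pow]
  exact mul_le_mul (pow_le_pow_of_le_one (norm_nonneg q) hq.le hexp) htwo (norm_nonneg _)
    (by positivity)

lemma exists_norm_boundary_le (hq : ‖q‖ < 1) :
    ∃ C, 0 ≤ C ∧ ∀ K r, r < K → ‖(-1) ^ K * q ^ (K * (K + 1)) / qPoch (q ^ 2) (q ^ 2) K +
      ∑ j ∈ range r, boundaryCoeff q K (j + 1)‖ ≤ C * ((K + 1 : ℕ) * ‖q‖ ^ K) := by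
  obtain ⟨B, hB⟩ := exists_norm_inv_qPoch_le (norm_sq_lt_one hq)
    (qPoch_self_ne_zero (not_isOfFinOrder_of_norm_lt_one (norm_sq_lt_one hq)))
  obtain ⟨D, hD0, hD⟩ := exists_norm_boundaryCoeff_le hq
  have hB0 : 0 ≤ B := (norm_nonneg _).trans (hB 0)
  refine ⟨B + D, by positivity, fun K r hr => ?_⟩
  have hfirst : ‖(-1) ^ K * q ^ (K * (K + 1)) / qPoch (q ^ 2) (q ^ 2) K‖ ≤ ‖q‖ ^ K * B := by
    rw [div_eq_mul_inv]
    simp only [norm_mul, norm_pow, norm_neg, norm_one, one_pow, one_mul]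
    exact mul_le_mul (pow_le_pow_of_le_one (norm_nonneg q) hq.le (by nlinarith)) (hB K)
      (norm_nonneg _) (by positivity)
  have hrest : ‖∑ j ∈ range r, boundaryCoeff q K (j + 1)‖ ≤ K * (D * ‖q‖ ^ K) := by
    refine (norm_sum_le_of_le _ fun j hj => hD K (j + 1) (by grind)).trans ?_
    rw [sum_const, card_range, nsmul_eq_mul]
    gcongr
  have hBK : 0 ≤ K * (B * ‖q‖ ^ K) := by positivity
  have hDK : 0 ≤ D * ‖q‖ ^ K := by positivity
  refine (norm_add_le_of_le hfirst hrest).trans ?_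
  push_cast
  linarith

lemma exists_norm_U_sub_le (hq : ‖q‖ < 1) (l : ℕ) :
    ∃ C, ∀ K, ‖U (l + 2) K q - ∑ r ∈ range K, falseThetaTerm l q r‖ ≤
      C * ((K + 1 : ℕ) * ‖q‖ ^ K) := by
  obtain ⟨C, hC0, hC⟩ := exists_norm_boundary_le hq
  refine ⟨(∑' r, ‖falseThetaTerm l q r‖) * C, fun K => ?_⟩
  rw [U_add_two_eq (not_isOfFinOrder_of_norm_lt_one hq), ← sum_sub_distrib]
  calc _ ≤ ∑ r ∈ range K, ‖falseThetaTerm l q r‖ * (C * ((K + 1 : ℕ) * ‖q‖ ^ K)) := by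
        refine norm_sum_le_of_le _ fun r hr => ?_
        rw [← mul_sub_one, norm_mul, sub_sub (1 : ℂ), sub_sub_cancel_left, norm_neg]
        gcongr
        exact hC K r (mem_range.1 hr)
    _ ≤ (∑' r, ‖falseThetaTerm l q r‖) * (C * ((K + 1 : ℕ) * ‖q‖ ^ K)) := by
        rw [← sum_mul]
        gcongr
        exact (summable_norm_falseThetaTerm hq l).sum_le_tsum _ fun _ _ => norm_nonneg _
    _ = _ := by ring

lemma hasSum_falseThetaTerm (hq : ‖q‖ < 1) (l : ℕ) :
    HasSum (falseThetaTerm l q) (G (l + 2) q) := by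
  obtain ⟨C, hC⟩ := exists_norm_U_sub_le hq l
  have hgeom : Tendsto (fun K : ℕ => ((K + 1 : ℕ) : ℝ) * ‖q‖ ^ K) atTop (𝓝 0) := by
    simpa [add_mul] using (tendsto_self_mul_const_pow_of_lt_one (norm_nonneg q) hq).add
      (tendsto_pow_atTop_nhds_zero_of_lt_one (norm_nonneg q) hq)
  have hdiff : Tendsto (fun K => U (l + 2) K q - ∑ r ∈ range K, falseThetaTerm l q r)
      atTop (𝓝 0) :=
    squeeze_zero_norm hC (by simpa using hgeom.const_mul C)
  have hsum : Summable (falseThetaTerm l q) := (summable_norm_falseThetaTerm hq l).of_norm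
  have hlim : Tendsto (fun K => U (l + 2) K q) atTop (𝓝 (∑' r, falseThetaTerm l q r)) := by
    simpa using hdiff.add hsum.tendsto_sum_tsum_nat
  rw [tendsto_nhds_unique (tendsto_U_atTop hq l) hlim]
  exact hsum.hasSum

end Convergence

section RootOfUnity

variable {ζ : ℂ} {N : ℕ}

lemma qPoch_self_ne_zero_of_lt {p : ℂ} (hp : IsPrimitiveRoot p N) {n : ℕ} (hn : n < N) :
    qPoch p p n ≠ 0 := by
  refine prod_ne_zero_iff.2 fun j hj => sub_ne_zero.2 fun h => ?_
  have hj := mem_range.1 hj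
  exact hp.pow_ne_one_of_pos_of_lt j.succ_ne_zero (by lia) (by rw [pow_succ', h])

lemma qPoch_self_eq_order {p : ℂ} {n : ℕ} (hp : IsPrimitiveRoot p (n + 1)) :
    qPoch p p n = n + 1 := by
  simpa only [qPoch, ← pow_succ'] using hp.prod_one_sub_pow_eq_order

lemma qPoch_neg_self_ne_zero_of_odd (hζ : ζ ^ N = 1) (hN : Odd N) (n : ℕ) :
    qPoch (-ζ) ζ n ≠ 0 := by
  refine prod_ne_zero_iff.2 fun j _ h => ?_
  have hneg : ζ ^ (j + 1) = -1 := by linear_combination h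
  have hone : (ζ ^ (j + 1)) ^ N = 1 := by rw [← pow_mul', pow_mul, hζ, one_pow]
  rw [hneg, hN.neg_one_pow] at hone
  norm_num at hone

lemma continuous_qPoch {f g : ℂ → ℂ} (hf : Continuous f) (hg : Continuous g) (n : ℕ) :
    Continuous fun q => qPoch (f q) (g q) n := by
  unfold qPoch
  fun_prop

lemma continuousAt_qBinom_sq (hζ : IsPrimitiveRoot (ζ ^ 2) N) {n : ℕ} (hn : n < N) (k : ℕ) :
    ContinuousAt (fun q => qBinom (q ^ 2) n k) ζ := by
  have hcont : ∀ j, ContinuousAt (fun q : ℂ => qPoch (q ^ 2) (q ^ 2) j) ζ := fun j =>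
    (continuous_qPoch (by fun_prop) (by fun_prop) j).continuousAt
  unfold qBinom
  split_ifs with hk
  · exact (hcont n).div ((hcont _).mul (hcont k)) (mul_ne_zero
      (qPoch_self_ne_zero_of_lt hζ (by lia)) (qPoch_self_ne_zero_of_lt hζ (by lia)))
  · exact continuousAt_const

lemma continuousAt_U (hζ : IsPrimitiveRoot ζ N) (hN : Odd N) (m : ℕ) :
    ContinuousAt (U m N) ζ := by
  refine tendsto_finsetSum _ fun n hn => ?_
  have hlt : ∀ i, pad (m - 1) n i < N := fun i => by
    unfold pad
    split_ifs
    exacts [mem_range.1 (Fintype.mem_piFinset.1 hn _), hN.pos]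
  have hnum : Continuous fun q : ℂ => qPoch q (q ^ 2) (pad (m - 1) n 0) :=
    continuous_qPoch continuous_id (continuous_pow 2) _
  have hden : Continuous fun q : ℂ => qPoch (-q) q (2 * pad (m - 1) n 0 + 1) :=
    continuous_qPoch continuous_neg continuous_id _
  have hprod : ContinuousAt (fun q : ℂ => ∏ i ∈ range (m - 2),
      qBinom (q ^ 2) (pad (m - 1) n (i + 1)) (pad (m - 1) n i)) ζ :=
    tendsto_finsetProd _ fun i _ =>
      continuousAt_qBinom_sq (hζ.pow_of_coprime 2 hN.coprime_two_left) (hlt _) _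
  exact ((((continuous_const.mul (continuous_pow _)).mul hnum).continuousAt).div
    hden.continuousAt (qPoch_neg_self_ne_zero_of_odd hζ.pow_eq_one hN _)).mul hprod

lemma sum_range_eq_zero_of_antisymm {f : ℕ → ℂ} {n : ℕ}
    (hf : ∀ i j, i + j + 1 = n → f i = -f j) : ∑ i ∈ range n, f i = 0 := by
  refine self_eq_neg.1 ?_
  rw [← sum_neg_distrib]
  conv_lhs => rw [← sum_range_reflect]
  exact sum_congr rfl fun i hi => hf _ _ (by grind)

lemma pow_sq_add_one_self (hζ : ζ ^ N = 1) : (ζ ^ 2) ^ (N + 1) = ζ ^ 2 := by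
  rw [pow_succ, ← pow_mul', pow_mul, hζ, one_pow, one_mul]

lemma boundaryCoeff_antisymm (hζ : ζ ^ N = 1) (hN : Odd N) {i j : ℕ} (hij : i + j = N) :
    boundaryCoeff ζ N i = -boundaryCoeff ζ N j := by
  have hsign : (-1 : ℂ) ^ (N + i) = -(-1) ^ (N + j) := by
    have hodd : (-1 : ℂ) ^ (i + j) = -1 := hij ▸ hN.neg_one_pow
    have hsq : ((-1 : ℂ) ^ j) ^ 2 = 1 := by rw [← pow_mul', pow_mul, neg_one_sq, one_pow]
    rw [pow_add] at hodd
    rw [pow_add, pow_add]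
    linear_combination (-1) ^ N * (-1) ^ j * hodd - (-1) ^ N * (-1) ^ i * hsq
  have hpow : (1 + ζ ^ (2 * i)) * ζ ^ (j * (N + i + 1)) =
      (1 + ζ ^ (2 * j)) * ζ ^ (i * (N + j + 1)) := by
    have hreduce : ∀ a b, a + b = N →
        (1 + ζ ^ (2 * a)) * ζ ^ (b * (N + a + 1)) = ζ ^ (a * b) * (ζ ^ a + ζ ^ b) :=
      fun a b hab => by
      calc _ = (ζ ^ N) ^ b * ζ ^ (a * b) * (ζ ^ b + ζ ^ (a + b) * ζ ^ a) := by ring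
        _ = _ := by rw [hab, hζ]; ring
    rw [hreduce i j hij, hreduce j i (by lia)]
    ring
  rw [boundaryCoeff, boundaryCoeff, pow_sq_add_one_self hζ, show N - i = j by lia,
    show N - j = i by lia, mul_assoc, mul_assoc, hpow, hsign]
  ring

lemma sum_boundaryCoeff_symm (hζ : ζ ^ N = 1) (hN : Odd N) {i r : ℕ} (hir : i + r + 1 = N) :
    ∑ j ∈ range i, boundaryCoeff ζ N (j + 1) = ∑ j ∈ range r, boundaryCoeff ζ N (j + 1) := by
  wlog h : r ≤ i generalizing i r
  · exact (this (by lia) (by lia)).symm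
  obtain ⟨d, rfl⟩ := Nat.exists_eq_add_of_le h
  rw [sum_range_add, add_eq_left]
  exact sum_range_eq_zero_of_antisymm fun a b hab => boundaryCoeff_antisymm hζ hN (by lia)

/-- The exponent `E(k)` for which the false theta function equal to `G_{l+2}` is
`∑ (q ^ E(r) - q ^ E(-1-r))`, the sum being over `r ≥ 0`. -/
def thetaExponent (l : ℕ) (k : ℤ) : ℤ := 2 * (l + 1) * k ^ 2 + (2 * l + 1) * k

lemma falseThetaTerm_eq_sub (l : ℕ) (q : ℂ) (r : ℕ) :
    falseThetaTerm l q r = q ^ thetaExponent l r - q ^ thetaExponent l (-1 - r) := by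
  have hfirst : thetaExponent l r = (2 * (l + 1) * r ^ 2 + (2 * l + 1) * r : ℕ) := by
    rw [thetaExponent]
    push_cast
    ring
  have hsecond : thetaExponent l (-1 - r) =
      (2 * (l + 1) * r ^ 2 + (2 * l + 1) * r + (2 * r + 1) : ℕ) := by
    rw [thetaExponent]
    push_cast
    ring
  rw [hfirst, hsecond, zpow_natCast, zpow_natCast, falseThetaTerm, pow_add _ (_ + _)]
  ring

lemma zpow_thetaExponent_add_mul (hζ : ζ ^ N = 1) (hN : N ≠ 0) (l : ℕ) (k d : ℤ) :
    ζ ^ thetaExponent l (k + d * N) = ζ ^ thetaExponent l k := by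
  have hζ0 : ζ ≠ 0 := fun h => by simp [h, hN] at hζ
  rw [show thetaExponent l (k + d * N) = thetaExponent l k +
    N * (2 * (l + 1) * (2 * k * d + d ^ 2 * N) + (2 * l + 1) * d) by
      rw [thetaExponent, thetaExponent]; ring,
    zpow_add₀ hζ0, zpow_mul, zpow_natCast, hζ, one_zpow, mul_one]

lemma falseThetaTerm_antisymm (hζ : ζ ^ N = 1) (l : ℕ) {i j : ℕ} (hij : i + j + 1 = N) :
    falseThetaTerm l ζ i = -falseThetaTerm l ζ j := by
  have hshift : ∀ a b : ℕ, a + b + 1 = N →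
      ζ ^ thetaExponent l (-1 - a) = ζ ^ thetaExponent l b := fun a b hab => by
    rw [← zpow_thetaExponent_add_mul hζ (by lia) l b (-1)]
    congr 2
    lia
  rw [falseThetaTerm_eq_sub, falseThetaTerm_eq_sub, hshift i j hij, hshift j i (by lia), neg_sub]

lemma sum_falseThetaTerm (hζ : ζ ^ N = 1) (l : ℕ) : ∑ r ∈ range N, falseThetaTerm l ζ r = 0 :=
  sum_range_eq_zero_of_antisymm fun _ _ => falseThetaTerm_antisymm hζ l

lemma sum_falseThetaTerm_mul_boundary (hζ : ζ ^ N = 1) (hN : Odd N) (l : ℕ) :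
    ∑ r ∈ range N, falseThetaTerm l ζ r * ∑ j ∈ range r, boundaryCoeff ζ N (j + 1) = 0 :=
  sum_range_eq_zero_of_antisymm fun i j hij => by
    rw [falseThetaTerm_antisymm hζ l hij, sum_boundaryCoeff_symm hζ hN hij, neg_mul]

lemma continuousAt_boundaryCoeff (hζ : IsPrimitiveRoot ζ N) (hN : Odd N) {j : ℕ} (hj0 : 0 < j)
    (hj : j < N) : ContinuousAt (fun q => boundaryCoeff q N j) ζ := by
  have hp := hζ.pow_of_coprime 2 hN.coprime_two_left
  have hleft : Continuous fun q : ℂ => qPoch (q ^ 2) (q ^ 2) (N - j) :=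
    continuous_qPoch (by fun_prop) (by fun_prop) _
  have hright : Continuous fun q : ℂ => qPoch ((q ^ 2) ^ (N + 1)) (q ^ 2) j :=
    continuous_qPoch (by fun_prop) (by fun_prop) _
  refine ContinuousAt.div (by fun_prop) (hleft.mul hright).continuousAt (mul_ne_zero
    (qPoch_self_ne_zero_of_lt hp (by lia)) ?_)
  rw [pow_sq_add_one_self hζ.pow_eq_one]
  exact qPoch_self_ne_zero_of_lt hp hj

lemma tendsto_one_sub_zpow_div (k : ℤ) :
    Tendsto (fun y : ℂ => (1 - y ^ k) / (1 - y ^ 2)) (𝓝[≠] 1) (𝓝 ((k : ℂ) / 2)) := by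
  have hnum := hasDerivAt_iff_tendsto_slope.1 (hasDerivAt_zpow k (1 : ℂ) (Or.inl one_ne_zero))
  have hden := hasDerivAt_iff_tendsto_slope.1 (hasDerivAt_pow 2 (1 : ℂ))
  have hquot := hnum.div hden (by norm_num)
  simp only [one_zpow, one_pow, mul_one, Nat.cast_ofNat] at hquot
  refine hquot.congr' (eventually_mem_nhdsWithin.mono fun y hy => ?_)
  have hy : y - 1 ≠ 0 := sub_ne_zero.2 hy
  simp only [Pi.div_apply, slope_def_field, one_zpow, one_pow]
  rw [div_div_div_cancel_right₀ hy, ← neg_sub, ← neg_sub (1 : ℂ), neg_div_neg_eq]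

/-- The sample points `(r + α) / N`, with `α = (2l+1)/(4(l+1))`, so that
`E(k) = 2(l+1)(k+α)² - 2(l+1)α²`. -/
noncomputable def thetaNode (l N r : ℕ) : ℝ := (r + (2 * l + 1) / (4 * (l + 1))) / N

lemma sum_falseThetaTerm_eq {q : ℂ} (hq : q ≠ 0) (l N : ℕ) :
    ∑ r ∈ range N, falseThetaTerm l q r = ∑ r ∈ range N, q ^ thetaExponent l r *
      (1 - (q ^ N) ^ (2 * (l + 1) * (N - 2 * r) - (2 * l + 1) : ℤ)) := by
  simp only [falseThetaTerm_eq_sub, sum_sub_distrib, mul_sub, mul_one]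
  congr 1
  rw [← sum_range_reflect]
  refine sum_congr rfl fun r hr => ?_
  rw [← zpow_natCast q N, ← zpow_mul, ← zpow_add₀ hq]
  congr 1
  rw [show (-1 - (N - 1 - r : ℕ) : ℤ) = r - N by grind, thetaExponent, thetaExponent]
  ring

lemma tendsto_sum_falseThetaTerm_div (hζ : ζ ^ N = 1) (hN : N ≠ 0) (l : ℕ) :
    Tendsto (fun q => (∑ r ∈ range N, falseThetaTerm l q r) / (1 - (q ^ 2) ^ N))
      (𝓝[Metric.ball 0 1] ζ)
      (𝓝 (N * ((l + 1) * ∑ r ∈ range N, ζ ^ thetaExponent l r * (1 - 2 * thetaNode l N r)))) := by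
  have hζ0 : ζ ≠ 0 := fun h => by simp [h, hN] at hζ
  have hpow : Tendsto (fun q : ℂ => q ^ N) (𝓝[Metric.ball 0 1] ζ) (𝓝[≠] 1) := by
    refine tendsto_nhdsWithin_iff.2 ⟨hζ ▸ ((continuous_pow N).tendsto ζ).mono_left
      nhdsWithin_le_nhds, eventually_mem_nhdsWithin.mono fun q hq h => ?_⟩
    exact not_isOfFinOrder_of_norm_lt_one (mem_ball_zero_iff.1 hq)
      (isOfFinOrder_iff_pow_eq_one.2 ⟨N, Nat.pos_of_ne_zero hN, h⟩)
  have hne : ∀ᶠ q in 𝓝[Metric.ball 0 1] ζ, q ≠ 0 :=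
    nhdsWithin_le_nhds (isOpen_ne.mem_nhds hζ0)
  have hterm : ∀ r ∈ range N, Tendsto (fun q : ℂ => q ^ thetaExponent l r *
      ((1 - (q ^ N) ^ (2 * (l + 1) * (N - 2 * r) - (2 * l + 1) : ℤ)) / (1 - (q ^ N) ^ 2)))
      (𝓝[Metric.ball 0 1] ζ) (𝓝 (ζ ^ thetaExponent l r *
        ((2 * (l + 1) * (N - 2 * r) - (2 * l + 1) : ℤ) / 2))) := fun r _ =>
    ((continuousAt_zpow₀ ζ _ (Or.inl hζ0)).tendsto.mono_left nhdsWithin_le_nhds).mul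
      ((tendsto_one_sub_zpow_div _).comp hpow)
  convert (tendsto_finsetSum _ hterm).congr' (hne.mono fun q hq => ?_) using 2
  · rw [← mul_assoc, mul_sum]
    refine sum_congr rfl fun r _ => ?_
    have hN' : (N : ℂ) ≠ 0 := Nat.cast_ne_zero.2 hN
    have hl : (l : ℂ) + 1 ≠ 0 := Nat.cast_add_one_ne_zero l
    rw [thetaNode]
    push_cast
    field_simp
    ring
  · rw [sum_falseThetaTerm_eq hq, sum_div]
    exact sum_congr rfl fun r _ => by rw [mul_div_assoc, pow_right_comm]

lemma U_add_two_eq_of_odd {q : ℂ} (hq : ¬ IsOfFinOrder q) (hN : Odd (N + 1)) (l : ℕ) :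
    U (l + 2) (N + 1) q = ∑ r ∈ range (N + 1), falseThetaTerm l q r +
      (∑ r ∈ range (N + 1), falseThetaTerm l q r) / (1 - (q ^ 2) ^ (N + 1)) *
        (q ^ ((N + 1) * (N + 2)) / qPoch (q ^ 2) (q ^ 2) N) -
      ∑ r ∈ range (N + 1), falseThetaTerm l q r *
        ∑ j ∈ range r, boundaryCoeff q (N + 1) (j + 1) := by
  simp only [U_add_two_eq hq, mul_sub, sum_sub_distrib, ← sum_mul, hN.neg_one_pow, qPoch_self_succ]
  have hp := not_isOfFinOrder_sq hq
  have hpoch := qPoch_self_ne_zero hp N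
  have hfactor := one_sub_pow_succ_ne_zero hp N
  field_simp
  ring

lemma U_add_two_eq_sum (hζ : IsPrimitiveRoot ζ N) (hN : Odd N) (l : ℕ) :
    U (l + 2) N ζ =
      (l + 1) * ∑ r ∈ range N, ζ ^ thetaExponent l r * (1 - 2 * thetaNode l N r) := by
  obtain ⟨n, rfl⟩ := Nat.exists_eq_add_one_of_ne_zero hN.pos.ne'
  have hp := hζ.pow_of_coprime 2 hN.coprime_two_left
  have hterm : ∀ r, ContinuousAt (fun q => falseThetaTerm l q r) ζ := fun r => by
    unfold falseThetaTerm
    fun_prop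
  have hsum : ContinuousAt (fun q => ∑ r ∈ range (n + 1), falseThetaTerm l q r) ζ :=
    tendsto_finsetSum _ fun r _ => hterm r
  have hboundary : ContinuousAt (fun q => ∑ r ∈ range (n + 1), falseThetaTerm l q r *
      ∑ j ∈ range r, boundaryCoeff q (n + 1) (j + 1)) ζ :=
    tendsto_finsetSum _ fun r hr => (hterm r).mul <| tendsto_finsetSum _ fun j hj =>
      continuousAt_boundaryCoeff hζ hN j.succ_pos (by grind)
  have hfactor : ContinuousAt
      (fun q => q ^ ((n + 1) * (n + 2)) / qPoch (q ^ 2) (q ^ 2) n) ζ :=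
    (continuous_pow _).continuousAt.div (continuous_qPoch (continuous_pow 2)
      (continuous_pow 2) n).continuousAt (qPoch_self_ne_zero_of_lt hp n.lt_succ_self)
  have hnebot : (𝓝[Metric.ball 0 1] ζ).NeBot := by
    rw [← mem_closure_iff_nhdsWithin_neBot, closure_ball _ one_ne_zero, mem_closedBall_zero_iff,
      hζ.norm'_eq_one hN.pos.ne']
  have hle : 𝓝[Metric.ball 0 1] ζ ≤ 𝓝 ζ := nhdsWithin_le_nhds
  have hlim := ((hsum.mono_left hle).add ((tendsto_sum_falseThetaTerm_div hζ.pow_eq_one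
    n.succ_ne_zero l).mul (hfactor.mono_left hle))).sub (hboundary.mono_left hle)
  have hU := hlim.congr' <| eventually_mem_nhdsWithin.mono fun q hq => (U_add_two_eq_of_odd
    (not_isOfFinOrder_of_norm_lt_one (mem_ball_zero_iff.1 hq)) hN l).symm
  have hn : (n : ℂ) + 1 ≠ 0 := Nat.cast_add_one_ne_zero n
  rw [tendsto_nhds_unique ((continuousAt_U hζ hN _).mono_left hle) hU]
  beta_reduce
  rw [sum_falseThetaTerm hζ.pow_eq_one, sum_falseThetaTerm_mul_boundary hζ.pow_eq_one hN,
    qPoch_self_eq_order hp, pow_mul, hζ.pow_eq_one, one_pow, Nat.cast_succ]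
  field_simp
  ring

end RootOfUnity

section ReflectedDifferences

variable {f f' f'' : ℝ → ℝ} {C x : ℝ}

lemma abs_sub_sub_mul_le {a b B c y z : ℝ} (hf : ∀ u ∈ Set.Icc a b, HasDerivAt f (f' u) u)
    (hB : ∀ u ∈ Set.Icc a b, |f' u - c| ≤ B) (hy : y ∈ Set.Icc a b) (hz : z ∈ Set.Icc a b) :
    |f z - f y - c * (z - y)| ≤ B * (b - a) := by
  have hderiv : ∀ u ∈ Set.Icc a b,
      HasDerivWithinAt (fun v => f v - c * v) (f' u - c) (Set.Icc a b) u := fun u hu => by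
    simpa using ((hf u hu).fun_sub ((hasDerivAt_id u).const_mul c)).hasDerivWithinAt
  have hB0 : 0 ≤ B := (abs_nonneg _).trans (hB y hy)
  have hdist : |z - y| ≤ b - a := abs_sub_le_of_le_of_le hz.1 hz.2 hy.1 hy.2
  calc |f z - f y - c * (z - y)| = |f z - c * z - (f y - c * y)| := by ring_nf
    _ ≤ B * |z - y| := (convex_Icc a b).norm_image_sub_le_of_norm_hasDerivWithin_le hderiv hB hy hz
    _ ≤ B * (b - a) := by gcongr

lemma abs_sub_sub_deriv_mul_le {a b B y z : ℝ} (hf : ∀ u, HasDerivAt f (f' u) u)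
    (hf' : ∀ u, HasDerivAt f' (f'' u) u) (hB : ∀ u ∈ Set.Icc a b, |f'' u| ≤ B)
    (hy : y ∈ Set.Icc a b) (hz : z ∈ Set.Icc a b) :
    |f z - f y - f' a * (z - y)| ≤ B * (b - a) ^ 2 := by
  have ha : a ∈ Set.Icc a b := ⟨le_rfl, hy.1.trans hy.2⟩
  have hslope : ∀ u ∈ Set.Icc a b, |f' u - f' a| ≤ B * (b - a) := fun u hu => by
    simpa using abs_sub_sub_mul_le (c := 0) (fun v _ => hf' v) (by simpa using hB) ha hu
  rw [sq, ← mul_assoc]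
  exact abs_sub_sub_mul_le (fun v _ => hf v) hslope hy hz

/-- The amount by which the reflected difference `f (ε(d+x)) - f (ε(d+1-x))` deviates from its
linear interpolation in `x`, whose slope is given by the case `x = 0`. -/
noncomputable def reflectionDefect (f : ℝ → ℝ) (x ε : ℝ) (d : ℕ) : ℝ :=
  f (ε * (d + x)) - f (ε * (d + 1 - x)) - (1 - 2 * x) * (f (ε * d) - f (ε * (d + 1)))

lemma abs_reflectionDefect_le {B ε : ℝ} (hε : 0 ≤ ε) (hx : x ∈ Set.Icc 0 1) (d : ℕ)
    (hf : ∀ u, HasDerivAt f (f' u) u) (hf' : ∀ u, HasDerivAt f' (f'' u) u)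
    (hB : ∀ u, ε * d ≤ u → |f'' u| ≤ B) : |reflectionDefect f x ε d| ≤ 2 * (B * ε ^ 2) := by
  have hmem : ∀ s ∈ Set.Icc (0 : ℝ) 1, ε * (d + s) ∈ Set.Icc (ε * d) (ε * d + ε) := fun s hs =>
    ⟨by nlinarith [mul_nonneg hε hs.1], by nlinarith [mul_nonneg hε (sub_nonneg.2 hs.2)]⟩
  have hlinear : ∀ s ∈ Set.Icc (0 : ℝ) 1, ∀ s' ∈ Set.Icc (0 : ℝ) 1,
      |f (ε * (d + s)) - f (ε * (d + s')) - f' (ε * d) * (ε * (d + s) - ε * (d + s'))| ≤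
        B * ε ^ 2 := fun s hs s' hs' => by
    simpa using abs_sub_sub_deriv_mul_le hf hf' (fun u hu => hB u hu.1) (hmem s' hs') (hmem s hs)
  have hinner := hlinear x hx (1 - x) ⟨by linarith [hx.2], by linarith [hx.1]⟩
  have hends := hlinear 0 (by simp) 1 (by simp)
  have hscale : |1 - 2 * x| ≤ 1 := abs_le.2 ⟨by linarith [hx.2], by linarith [hx.1]⟩
  calc |reflectionDefect f x ε d|
      = |(f (ε * (d + x)) - f (ε * (d + (1 - x))) -
            f' (ε * d) * (ε * (d + x) - ε * (d + (1 - x)))) -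
          (1 - 2 * x) * (f (ε * (d + 0)) - f (ε * (d + 1)) -
            f' (ε * d) * (ε * (d + 0) - ε * (d + 1)))| := by
        rw [reflectionDefect]
        ring_nf
    _ ≤ B * ε ^ 2 + 1 * (B * ε ^ 2) := by
        refine (abs_sub _ _).trans (add_le_add hinner ?_)
        rw [abs_mul]
        gcongr
    _ = 2 * (B * ε ^ 2) := by ring

lemma abs_reflectionDefect_le_div (hf : ∀ u, HasDerivAt f (f' u) u)
    (hf' : ∀ u, HasDerivAt f' (f'' u) u) (hC : ∀ u, |f'' u| ≤ C / (1 + u ^ 2))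
    (hx : x ∈ Set.Icc 0 1) {ε : ℝ} (hε : ε ∈ Set.Ioc 0 1) (d : ℕ) :
    |reflectionDefect f x ε d| ≤ 2 * C * (1 / (1 + (d : ℝ) ^ 2)) := by
  have hC0 : 0 ≤ C := by simpa using (abs_nonneg _).trans (hC 0)
  have hε0 : 0 ≤ ε := hε.1.le
  refine (abs_reflectionDefect_le (B := C / (1 + (ε * d) ^ 2)) hε0 hx d hf hf'
    fun u hu => (hC u).trans (by gcongr)).trans ?_
  have hscale : ε ^ 2 ≤ 1 := pow_le_one₀ hε0 hε.2
  rw [mul_assoc, mul_one_div, div_mul_eq_mul_div]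
  gcongr 2 * ?_
  rw [div_le_div_iff₀ (by positivity) (by positivity)]
  nlinarith [mul_le_mul_of_nonneg_left hscale hC0]

lemma summable_one_div_one_add_sq : Summable fun d : ℕ => 1 / (1 + (d : ℝ) ^ 2) := by
  refine (summable_nat_add_iff 1).1 <| Summable.of_nonneg_of_le (fun d => by positivity)
    (fun d => ?_) ((summable_nat_add_iff 1).2 (Real.summable_one_div_nat_pow.2 one_lt_two))
  gcongr
  linarith

lemma tendsto_sum_reflected_sub (hf : ∀ u, HasDerivAt f (f' u) u)
    (hf' : ∀ u, HasDerivAt f' (f'' u) u) (hC : ∀ u, |f'' u| ≤ C / (1 + u ^ 2))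
    (hlim : Tendsto f atTop (𝓝 0)) (hx : x ∈ Set.Icc 0 1) {ε : ℝ} (hε : ε ∈ Set.Ioc 0 1) :
    Tendsto (fun D : ℕ => ∑ d ∈ range D, (f (ε * (d + x)) - f (ε * (d + 1 - x)))) atTop
      (𝓝 (∑' d, reflectionDefect f x ε d + (1 - 2 * x) * f 0)) := by
  have hdefect : Summable (reflectionDefect f x ε) := Summable.of_norm_bounded
    (summable_one_div_one_add_sq.mul_left _) (abs_reflectionDefect_le_div hf hf' hC hx hε)
  have htail : Tendsto (fun D : ℕ => f 0 - f (ε * D)) atTop (𝓝 (f 0 - 0)) :=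
    (hlim.comp (tendsto_natCast_atTop_atTop.const_mul_atTop hε.1)).const_sub _
  have hsum := hdefect.tendsto_sum_tsum_nat.add (htail.const_mul (1 - 2 * x))
  rw [sub_zero] at hsum
  refine hsum.congr fun D => ?_
  have htele := sum_range_sub' (fun d : ℕ => f (ε * d)) D
  push_cast at htele
  rw [mul_zero] at htele
  rw [← htele, mul_sum, ← sum_add_distrib]
  exact sum_congr rfl fun d _ => by rw [reflectionDefect]; ring

lemma tendsto_tsum_reflectionDefect (hf : ∀ u, HasDerivAt f (f' u) u)
    (hf' : ∀ u, HasDerivAt f' (f'' u) u) (hC : ∀ u, |f'' u| ≤ C / (1 + u ^ 2))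
    (hx : x ∈ Set.Icc 0 1) :
    Tendsto (fun ε => ∑' d, reflectionDefect f x ε d) (𝓝[>] 0) (𝓝 0) := by
  have hC0 : 0 ≤ C := by simpa using (abs_nonneg _).trans (hC 0)
  suffices Tendsto (fun ε => ∑' d, reflectionDefect f x ε d) (𝓝[>] 0) (𝓝 (∑' _ : ℕ, 0)) by
    rwa [tsum_zero] at this
  refine tendsto_tsum_of_dominated_convergence (summable_one_div_one_add_sq.mul_left (2 * C))
    (fun d => ?_) ?_
  · have hsq : Tendsto (fun ε : ℝ => 2 * (C * ε ^ 2)) (𝓝[>] 0) (𝓝 0) := by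
      have hcont : Continuous fun ε : ℝ => 2 * (C * ε ^ 2) := by fun_prop
      simpa using (hcont.tendsto 0).mono_left nhdsWithin_le_nhds
    refine squeeze_zero_norm' (eventually_mem_nhdsWithin.mono fun ε hε => ?_) hsq
    exact abs_reflectionDefect_le (le_of_lt hε) hx d hf hf' fun u _ =>
      (hC u).trans (div_le_self hC0 (by nlinarith [sq_nonneg u]))
  · filter_upwards [Ioc_mem_nhdsGT one_pos] with ε hε d
    exact abs_reflectionDefect_le_div hf hf' hC hx hε d

end ReflectedDifferences

section Gaussian

/-- The profile `exp (-y²)` of the theta terms along a radius. -/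
noncomputable def gaussian (y : ℝ) : ℝ := Real.exp (-y ^ 2)

lemma hasDerivAt_gaussian (y : ℝ) : HasDerivAt gaussian (-2 * y * gaussian y) y :=
  (hasDerivAt_pow 2 y).fun_neg.exp.congr_deriv (by rw [gaussian]; push_cast; ring)

lemma hasDerivAt_deriv_gaussian (y : ℝ) :
    HasDerivAt (fun y => -2 * y * gaussian y) ((4 * y ^ 2 - 2) * gaussian y) y :=
  (((hasDerivAt_id y).const_mul (-2)).mul (hasDerivAt_gaussian y)).congr_deriv (by rw [id]; ring)

lemma abs_deriv_deriv_gaussian_le (y : ℝ) :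
    |(4 * y ^ 2 - 2) * gaussian y| ≤ 8 / (1 + y ^ 2) := by
  have hquad := Real.quadratic_le_exp_of_nonneg (sq_nonneg y)
  have hbound : |4 * y ^ 2 - 2| ≤ 4 * y ^ 2 + 2 :=
    abs_le.2 ⟨by linarith [sq_nonneg y], by linarith⟩
  rw [abs_mul, gaussian, Real.abs_exp, Real.exp_neg, ← div_eq_mul_inv,
    div_le_div_iff₀ (Real.exp_pos _) (by positivity)]
  calc _ ≤ (4 * y ^ 2 + 2) * (1 + y ^ 2) := by gcongr
    _ ≤ 8 * (1 + y ^ 2 + (y ^ 2) ^ 2 / 2) := by nlinarith [sq_nonneg y]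
    _ ≤ 8 * Real.exp (y ^ 2) := by gcongr

lemma tendsto_gaussian_atTop : Tendsto gaussian atTop (𝓝 0) :=
  Real.tendsto_exp_neg_atTop_nhds_zero.comp (tendsto_pow_atTop two_ne_zero)

end Gaussian

section RadialLimit

variable {ζ : ℂ} {N : ℕ}

/-- The constant `κ = 2(l+1)α²`, with `α = (2l+1)/(4(l+1))`, that completes the square in the theta
exponent: `E(k) + κ = 2(l+1)(k+α)²`. -/
noncomputable def thetaShift (l : ℕ) : ℝ := (2 * l + 1) ^ 2 / (8 * (l + 1))

/-- The step `ε` for which the theta terms at radial distance `t` from an `N`th root of unity are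
values of the Gaussian at multiples of `ε`. -/
noncomputable def thetaStep (l N : ℕ) (t : ℝ) : ℝ := N * √(2 * (l + 1) * t)

lemma thetaNode_mem_Icc (l : ℕ) {r : ℕ} (hr : r < N) : thetaNode l N r ∈ Set.Icc 0 1 := by
  have hshift : (2 * l + 1 : ℝ) / (4 * (l + 1)) ≤ 1 :=
    div_le_one_of_le₀ (by linarith) (by positivity)
  have hr' : (r : ℝ) + 1 ≤ N := mod_cast hr
  refine ⟨by unfold thetaNode; positivity, div_le_one_of_le₀ (by linarith) N.cast_nonneg⟩

lemma sum_range_mul_eq_sum_sum (f : ℕ → ℂ) (D N : ℕ) :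
    ∑ s ∈ range (D * N), f s = ∑ d ∈ range D, ∑ r ∈ range N, f (d * N + r) := by
  induction D with
  | zero => simp
  | succ D ih => rw [Nat.succ_mul, sum_range_add, ih, sum_range_succ]

lemma sum_falseThetaTerm_block (l : ℕ) (q : ℂ) (N d : ℕ) :
    ∑ r ∈ range N, falseThetaTerm l q (d * N + r) = ∑ r ∈ range N,
      (q ^ thetaExponent l (r + d * N) - q ^ thetaExponent l (r + (-1 - d) * N)) := by
  simp only [falseThetaTerm_eq_sub, sum_sub_distrib]
  congr 1
  · exact sum_congr rfl fun r _ => by push_cast; rw [add_comm]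
  · rw [← sum_range_reflect]
    refine sum_congr rfl fun r hr => ?_
    congr 2
    rw [show N - 1 - r = N - (r + 1) by lia]
    push_cast [Nat.succ_le_of_lt (mem_range.1 hr)]
    ring

lemma exp_mul_zpow_thetaExponent (l : ℕ) {t s : ℝ} (ht : 0 ≤ t) {k : ℤ}
    (hs : (k + (2 * l + 1) / (4 * (l + 1)) : ℝ) ^ 2 = (N * s) ^ 2) :
    Complex.exp (-(thetaShift l * t)) * (ζ * Complex.exp (-t)) ^ thetaExponent l k =
      ζ ^ thetaExponent l k * gaussian (thetaStep l N t * s) := by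
  have hsquare : (thetaStep l N t * s) ^ 2 = (thetaShift l + thetaExponent l k) * t := by
    rw [thetaStep, mul_right_comm, mul_pow, ← hs, Real.sq_sqrt (by positivity), thetaShift,
      thetaExponent]
    push_cast
    field_simp
    ring
  rw [gaussian, hsquare, mul_zpow, ← Complex.exp_int_mul, mul_left_comm, ← Complex.exp_add]
  push_cast
  ring_nf

lemma exp_mul_sum_falseThetaTerm (hζ : ζ ^ N = 1) (hN : N ≠ 0) (l : ℕ) {t : ℝ} (ht : 0 ≤ t)
    (D : ℕ) :
    Complex.exp (-(thetaShift l * t)) *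
        ∑ s ∈ range (D * N), falseThetaTerm l (ζ * Complex.exp (-t)) s =
      ∑ r ∈ range N, ζ ^ thetaExponent l r * (∑ d ∈ range D,
        (gaussian (thetaStep l N t * (d + thetaNode l N r)) -
          gaussian (thetaStep l N t * (d + 1 - thetaNode l N r))) : ℝ) := by
  have hterm : ∀ (r : ℕ) (d : ℤ) (s : ℝ), (d + thetaNode l N r) ^ 2 = s ^ 2 →
      Complex.exp (-(thetaShift l * t)) *
          (ζ * Complex.exp (-t)) ^ thetaExponent l (r + d * N) =
        ζ ^ thetaExponent l r * gaussian (thetaStep l N t * s) := fun r d s hs => by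
    rw [exp_mul_zpow_thetaExponent l ht (s := s), zpow_thetaExponent_add_mul hζ hN]
    rw [mul_pow, ← hs, ← mul_pow, thetaNode]
    push_cast
    field_simp
    ring
  simp only [sum_range_mul_eq_sum_sum, sum_falseThetaTerm_block, Complex.ofReal_sum, mul_sum]
  rw [sum_comm]
  refine sum_congr rfl fun r _ => sum_congr rfl fun d _ => ?_
  rw [mul_sub, hterm r d (d + thetaNode l N r) (by push_cast; rfl),
    hterm r (-1 - d) (d + 1 - thetaNode l N r) (by push_cast; ring)]
  push_cast
  ring

lemma exp_mul_G_add_two (hζ : ζ ^ N = 1) (hN : N ≠ 0) (l : ℕ) {t : ℝ} (ht : 0 < t)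
    (hstep : thetaStep l N t ∈ Set.Ioc 0 1) :
    Complex.exp (-(thetaShift l * t)) * G (l + 2) (ζ * Complex.exp (-t)) =
      ∑ r ∈ range N, ζ ^ thetaExponent l r *
        (∑' d, reflectionDefect gaussian (thetaNode l N r) (thetaStep l N t) d +
          (1 - 2 * thetaNode l N r) : ℝ) := by
  have hq : ‖ζ * Complex.exp (-t)‖ < 1 := by
    rw [norm_mul, Complex.norm_eq_one_of_pow_eq_one hζ hN, one_mul, ← Complex.ofReal_neg,
      Complex.norm_exp_ofReal]
    exact Real.exp_lt_one_iff.2 (neg_neg_of_pos ht)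
  have hG := ((hasSum_falseThetaTerm hq l).tendsto_sum_nat.comp
    (tendsto_id.atTop_mul_const' (Nat.pos_of_ne_zero hN))).const_mul
      (Complex.exp (-(thetaShift l * t)))
  have hgauss := tendsto_finsetSum (range N) fun r hr =>
    ((Complex.continuous_ofReal.tendsto _).comp (tendsto_sum_reflected_sub hasDerivAt_gaussian
      hasDerivAt_deriv_gaussian abs_deriv_deriv_gaussian_le tendsto_gaussian_atTop
      (thetaNode_mem_Icc l (mem_range.1 hr)) hstep)).const_mul (ζ ^ thetaExponent l r)
  simpa [gaussian] using tendsto_nhds_unique hG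
    (hgauss.congr fun D => (exp_mul_sum_falseThetaTerm hζ hN l ht.le D).symm)

lemma tendsto_thetaStep (hN : N ≠ 0) (l : ℕ) :
    Tendsto (thetaStep l N) (𝓝[>] 0) (𝓝[>] 0) := by
  refine tendsto_nhdsWithin_iff.2 ⟨?_, eventually_mem_nhdsWithin.mono fun t ht => ?_⟩
  · have hcont : Continuous (thetaStep l N) := by unfold thetaStep; fun_prop
    simpa [thetaStep] using (hcont.tendsto 0).mono_left nhdsWithin_le_nhds
  · have ht : 0 < t := ht
    have hroot : 0 < √(2 * (l + 1) * t) := by positivity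
    exact mul_pos (Nat.cast_pos.2 (Nat.pos_of_ne_zero hN)) hroot

lemma tendsto_exp_mul_G_add_two (hζ : ζ ^ N = 1) (hN : N ≠ 0) (l : ℕ) :
    Tendsto (fun t : ℝ => Complex.exp (-(thetaShift l * t)) * G (l + 2) (ζ * Complex.exp (-t)))
      (𝓝[>] 0) (𝓝 (∑ r ∈ range N, ζ ^ thetaExponent l r * (1 - 2 * thetaNode l N r))) := by
  have hstep := tendsto_thetaStep hN l
  have hterm : ∀ r ∈ range N, Tendsto (fun t : ℝ => ζ ^ thetaExponent l r *
      ((∑' d, reflectionDefect gaussian (thetaNode l N r) (thetaStep l N t) d +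
        (1 - 2 * thetaNode l N r) : ℝ) : ℂ)) (𝓝[>] 0)
      (𝓝 (ζ ^ thetaExponent l r * (0 + (1 - 2 * thetaNode l N r) : ℝ))) := fun r hr =>
    ((Complex.continuous_ofReal.tendsto _).comp <| ((tendsto_tsum_reflectionDefect
      hasDerivAt_gaussian hasDerivAt_deriv_gaussian abs_deriv_deriv_gaussian_le
      (thetaNode_mem_Icc l (mem_range.1 hr))).comp hstep).add_const _).const_mul _
  have hsum := tendsto_finsetSum _ hterm
  simp only [zero_add, Complex.ofReal_sub, Complex.ofReal_mul, Complex.ofReal_one,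
    Complex.ofReal_ofNat] at hsum
  refine hsum.congr' ?_
  filter_upwards [eventually_mem_nhdsWithin, hstep (Ioc_mem_nhdsGT one_pos)] with t ht ht1
  rw [exp_mul_G_add_two hζ hN l ht ht1]

end RadialLimit

theorem stmt10 (m : ℕ) (hm : 2 ≤ m) (M : ℤ) (N : ℕ) (hN : 0 < N) (hNodd : Odd N)
    (hMN : IsCoprime M (N : ℤ)) :
    Filter.Tendsto
      (fun t : ℝ => ((m : ℂ) - 1) *
        Complex.exp ((2 * Real.pi * Complex.I * M / N - t) *
          ((2 * (m : ℂ) - 3) ^ 2 / (8 * ((m : ℂ) - 1)))) *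
        G m (Complex.exp (2 * Real.pi * Complex.I * M / N - t)))
      (nhdsWithin 0 (Set.Ioi 0))
      (nhds (Complex.exp (2 * Real.pi * Complex.I * M * ((2 * (m : ℂ) - 3) ^ 2) /
          (8 * ((m : ℂ) - 1) * N)) *
        U m N (Complex.exp (2 * Real.pi * Complex.I * M / N)))) := by
  obtain ⟨l, rfl⟩ := Nat.exists_eq_add_of_le' hm
  have hζ : IsPrimitiveRoot (Complex.exp (2 * Real.pi * Complex.I * M / N)) N := by
    simpa only [← mul_div_assoc] using Complex.isPrimitiveRoot_exp_of_isCoprime M N hN.ne' hMN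
  have hκ : (2 * ((l + 2 : ℕ) : ℂ) - 3) ^ 2 / (8 * (((l + 2 : ℕ) : ℂ) - 1)) = thetaShift l := by
    rw [thetaShift]
    push_cast
    ring
  have hexp : ∀ a t κ : ℂ, Complex.exp ((a - t) * κ) =
      Complex.exp (a * κ) * Complex.exp (-(κ * t)) := fun a t κ => by
    rw [← Complex.exp_add]
    ring_nf
  have hlim := (tendsto_exp_mul_G_add_two hζ.pow_eq_one hN.ne' l).const_mul ((l : ℂ) + 1)
  replace hlim :=
    hlim.const_mul (Complex.exp (2 * Real.pi * Complex.I * M / N * thetaShift l))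
  rw [← U_add_two_eq_sum hζ hNodd] at hlim
  convert hlim using 2 with t
  · rw [hκ, hexp, sub_eq_add_neg _ (t : ℂ), Complex.exp_add]
    push_cast
    ring
  · rw [← hκ, div_mul_div_comm, mul_comm (N : ℂ)]
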